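/- ∫₀^{∞} (t/(1+t²)³) · (∫₀^{π/2} √(1 + t² sin²θ) dθ) dt = 3π²/64. -/

import Mathlib

open Real

/-!
The integrand `t / (1 + t²)^(n+2) · √(1 + t² sin² θ)` is the polar form of
`√(1 + y²) / (1 + x² + y²)^(n+2)`. In Cartesian coordinates the integral over `x` is a rescaled
copy of `∫ (1 + x²)^(-n-2)`, and the square roots cancel: what remains to be integrated over `y` is
`(1 + y²)^(-n-1)`. So the planar integral is a product of two Wallis integrals, and the symmetries
of `sin²` make it four times the wanted one.
-/

open Filter MeasureTheory Set Topology

theorem integrable_inv_one_add_sq_pow (n : ℕ) :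
    Integrable fun x : ℝ ↦ ((1 + x ^ 2) ^ (n + 1))⁻¹ := by
  refine integrable_inv_one_add_sq.mono' (Measurable.aestronglyMeasurable (by fun_prop))
    (ae_of_all _ fun x ↦ ?_)
  rw [norm_of_nonneg (by positivity)]
  gcongr
  exact le_self_pow₀ (le_add_of_nonneg_right (sq_nonneg x)) n.succ_ne_zero

theorem hasDerivAt_div_one_add_sq_pow (n : ℕ) (x : ℝ) :
    HasDerivAt (fun x : ℝ ↦ x / (1 + x ^ 2) ^ (n + 1))
      ((2 * n + 2 : ℝ) * ((1 + x ^ 2) ^ (n + 2))⁻¹ -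
        (2 * n + 1 : ℝ) * ((1 + x ^ 2) ^ (n + 1))⁻¹) x := by
  have hx : 1 + x ^ 2 ≠ 0 := by positivity
  have hden : HasDerivAt (fun x : ℝ ↦ (1 + x ^ 2) ^ (n + 1))
      ((n + 1) * (1 + x ^ 2) ^ n * (2 * x)) x := by
    simpa using ((hasDerivAt_pow 2 x).const_add 1).fun_pow (n + 1)
  refine ((hasDerivAt_id x).div hden (pow_ne_zero _ hx)).congr_deriv ?_
  simp only [id]
  field_simp
  ring

theorem tendsto_div_one_add_sq_pow_cobounded (n : ℕ) :
    Tendsto (fun x : ℝ ↦ x / (1 + x ^ 2) ^ (n + 1)) (Bornology.cobounded ℝ) (𝓝 0) := by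
  refine squeeze_zero_norm (fun x ↦ ?_) (tendsto_norm_zero.comp (tendsto_inv₀_cobounded (α := ℝ)))
  have hpow : x ^ 2 ≤ (1 + x ^ 2) ^ (n + 1) :=
    (le_add_of_nonneg_left zero_le_one).trans
      (le_self_pow₀ (le_add_of_nonneg_right (sq_nonneg x)) n.succ_ne_zero)
  rcases eq_or_ne x 0 with rfl | hx
  · simp
  · calc ‖x / (1 + x ^ 2) ^ (n + 1)‖ = |x| / (1 + x ^ 2) ^ (n + 1) := by
          rw [norm_div, norm_of_nonneg (by positivity : 0 ≤ (1 + x ^ 2) ^ (n + 1)), norm_eq_abs]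
      _ ≤ |x| / x ^ 2 := by gcongr
      _ = ‖x⁻¹‖ := by rw [← sq_abs, norm_inv, norm_eq_abs]; field_simp

theorem integral_inv_one_add_sq_pow_succ (n : ℕ) :
    ∫ x : ℝ, ((1 + x ^ 2) ^ (n + 2))⁻¹ =
      (2 * n + 1 : ℝ) / (2 * n + 2) * ∫ x : ℝ, ((1 + x ^ 2) ^ (n + 1))⁻¹ := by
  have hint (k : ℕ) (c : ℝ) : Integrable fun x : ℝ ↦ c * ((1 + x ^ 2) ^ (k + 1))⁻¹ :=
    (integrable_inv_one_add_sq_pow k).const_mul c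
  have hzero := integral_of_hasDerivAt_of_tendsto (hasDerivAt_div_one_add_sq_pow n)
    ((hint (n + 1) _).sub (hint n _))
    ((tendsto_div_one_add_sq_pow_cobounded n).mono_left IsOrderBornology.atBot_le_cobounded)
    ((tendsto_div_one_add_sq_pow_cobounded n).mono_left IsOrderBornology.atTop_le_cobounded)
  rw [integral_sub (hint (n + 1) _) (hint n _), integral_const_mul, integral_const_mul] at hzero
  rw [div_mul_eq_mul_div, eq_div_iff (by positivity)]
  linear_combination hzero

theorem integral_inv_one_add_sq_pow (n : ℕ) :
    ∫ x : ℝ, ((1 + x ^ 2) ^ (n + 1))⁻¹ =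
      π * ∏ i ∈ Finset.range n, (2 * i + 1 : ℝ) / (2 * i + 2) := by
  induction n with
  | zero => simp
  | succ n ih => rw [integral_inv_one_add_sq_pow_succ, ih, Finset.prod_range_succ]; ring

theorem inv_add_sq_pow_eq_mul {a : ℝ} (ha : 0 < a) (n : ℕ) (x : ℝ) :
    ((a + x ^ 2) ^ n)⁻¹ = (a ^ n)⁻¹ * ((1 + (x / √a) ^ 2) ^ n)⁻¹ := by
  rw [← mul_inv, ← mul_pow, div_pow, sq_sqrt ha.le, mul_add, mul_one, mul_div_cancel₀ _ ha.ne']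

theorem integrable_inv_add_sq_pow {a : ℝ} (ha : 0 < a) (n : ℕ) :
    Integrable fun x : ℝ ↦ ((a + x ^ 2) ^ (n + 1))⁻¹ := by
  simp only [inv_add_sq_pow_eq_mul ha]
  exact ((integrable_inv_one_add_sq_pow n).comp_div (sqrt_ne_zero'.2 ha)).const_mul _

theorem integral_inv_add_sq_pow {a : ℝ} (ha : 0 < a) (n : ℕ) :
    ∫ x : ℝ, ((a + x ^ 2) ^ n)⁻¹ = √a / a ^ n * ∫ x : ℝ, ((1 + x ^ 2) ^ n)⁻¹ := by
  simp only [inv_add_sq_pow_eq_mul ha]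
  rw [integral_const_mul, Measure.integral_comp_div (fun x : ℝ ↦ ((1 + x ^ 2) ^ n)⁻¹),
    abs_of_nonneg (sqrt_nonneg a), smul_eq_mul]
  ring

theorem integral_sqrt_mul_inv_one_add_sq_add_sq_pow (n : ℕ) (y : ℝ) :
    ∫ x : ℝ, √(1 + y ^ 2) * ((1 + y ^ 2 + x ^ 2) ^ (n + 2))⁻¹ =
      (∫ x : ℝ, ((1 + x ^ 2) ^ (n + 2))⁻¹) * ((1 + y ^ 2) ^ (n + 1))⁻¹ := by
  have hy : 0 < 1 + y ^ 2 := by positivity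
  rw [integral_const_mul, integral_inv_add_sq_pow hy, ← mul_assoc, ← mul_div_assoc,
    mul_self_sqrt hy.le, pow_succ' _ (n + 1), div_mul_cancel_left₀ hy.ne', mul_comm]

theorem integrable_sqrt_mul_inv_one_add_sq_add_sq_pow (n : ℕ) :
    Integrable fun z : ℝ × ℝ ↦ √(1 + z.2 ^ 2) * ((1 + z.2 ^ 2 + z.1 ^ 2) ^ (n + 2))⁻¹ := by
  have hslice (y : ℝ) :
      Integrable fun x : ℝ ↦ √(1 + y ^ 2) * ((1 + y ^ 2 + x ^ 2) ^ (n + 2))⁻¹ :=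
    (integrable_inv_add_sq_pow (by positivity) (n + 1)).const_mul _
  have hnorm (x y : ℝ) : ‖√(1 + y ^ 2) * ((1 + y ^ 2 + x ^ 2) ^ (n + 2))⁻¹‖ =
      √(1 + y ^ 2) * ((1 + y ^ 2 + x ^ 2) ^ (n + 2))⁻¹ := norm_of_nonneg (by positivity)
  refine (integrable_prod_iff' (Measurable.aestronglyMeasurable (by fun_prop))).2
    ⟨ae_of_all _ hslice, ?_⟩
  simp only [hnorm, integral_sqrt_mul_inv_one_add_sq_add_sq_pow]
  exact (integrable_inv_one_add_sq_pow n).const_mul _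

theorem integral_prod_sqrt_mul_inv_one_add_sq_add_sq_pow (n : ℕ) :
    ∫ z : ℝ × ℝ, √(1 + z.2 ^ 2) * ((1 + z.2 ^ 2 + z.1 ^ 2) ^ (n + 2))⁻¹ =
      (∫ x : ℝ, ((1 + x ^ 2) ^ (n + 2))⁻¹) * ∫ x : ℝ, ((1 + x ^ 2) ^ (n + 1))⁻¹ := by
  rw [Measure.volume_eq_prod,
    integral_prod_symm _ (integrable_sqrt_mul_inv_one_add_sq_add_sq_pow n)]
  simp only [integral_sqrt_mul_inv_one_add_sq_add_sq_pow]
  exact integral_const_mul _ _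

section PolarCoordinates

variable {E : Type*} [NormedAddCommGroup E] [NormedSpace ℝ E]

theorem integrableOn_smul_comp_polarCoord_symm {f : ℝ × ℝ → E} (hf : Integrable f) :
    IntegrableOn (fun p ↦ p.1 • f (polarCoord.symm p)) polarCoord.target := by
  have htarget : MeasurableSet polarCoord.target := polarCoord.open_target.measurableSet
  have habs := (integrableOn_image_iff_integrableOn_abs_det_fderiv_smul volume htarget
    (fun p _ ↦ (hasFDerivAt_polarCoord_symm p).hasFDerivWithinAt) polarCoord.symm.injOn f).1
    hf.integrableOn
  refine habs.congr_fun (fun p hp ↦ ?_) htarget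
  simp only [det_fderivPolarCoordSymm, abs_of_pos (show 0 < p.1 from hp.1)]

theorem integral_eq_integral_Ioi_integral_polar {f : ℝ × ℝ → E} (hf : Integrable f) :
    ∫ z, f z = ∫ r in Ioi (0 : ℝ), ∫ θ in -π..π, r • f (r * cos θ, r * sin θ) := by
  have hint := integrableOn_smul_comp_polarCoord_symm hf
  rw [polarCoord_target, Measure.volume_eq_prod] at hint
  rw [← integral_comp_polarCoord_symm f, polarCoord_target, Measure.volume_eq_prod,
    setIntegral_prod _ hint]
  simp only [intervalIntegral.integral_of_le (neg_le_self pi_nonneg),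
    integral_Ioc_eq_integral_Ioo, polarCoord_symm_apply]

theorem integral_neg_pi_pi_comp_sin_sq {g : ℝ → E} (hg : Continuous g) :
    ∫ θ in -π..π, g (sin θ ^ 2) = (4 : ℝ) • ∫ θ in 0..π / 2, g (sin θ ^ 2) := by
  have hint (a b : ℝ) : IntervalIntegrable (fun θ ↦ g (sin θ ^ 2)) volume a b :=
    Continuous.intervalIntegrable (by fun_prop) a b
  have hneg : ∫ θ in -π..0, g (sin θ ^ 2) = ∫ θ in 0..π, g (sin θ ^ 2) := by
    rw [← neg_zero, ← intervalIntegral.integral_comp_neg, neg_zero]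
    simp only [sin_neg, neg_sq]
  have hpi_sub : ∫ θ in π / 2..π, g (sin θ ^ 2) = ∫ θ in 0..π / 2, g (sin θ ^ 2) := by
    simpa [sub_half] using
      (intervalIntegral.integral_comp_sub_left (a := 0) (b := π / 2) (fun θ ↦ g (sin θ ^ 2)) π).symm
  rw [← intervalIntegral.integral_add_adjacent_intervals (hint (-π) 0) (hint 0 π), hneg,
    ← intervalIntegral.integral_add_adjacent_intervals (hint 0 (π / 2)) (hint (π / 2) π), hpi_sub]
  module

end PolarCoordinates

theorem integral_E_over_cube_general (n : ℕ) :
    ∫ t in Ioi (0 : ℝ), t / (1 + t ^ 2) ^ (n + 2) * ∫ θ in 0..π / 2, √(1 + t ^ 2 * sin θ ^ 2) =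
      π ^ 2 / 4 * (∏ i ∈ Finset.range (n + 1), (2 * i + 1 : ℝ) / (2 * i + 2)) *
        ∏ i ∈ Finset.range n, (2 * i + 1 : ℝ) / (2 * i + 2) := by
  have hpolar (t θ : ℝ) :
      t • (√(1 + (t * sin θ) ^ 2) * ((1 + (t * sin θ) ^ 2 + (t * cos θ) ^ 2) ^ (n + 2))⁻¹) =
        t / (1 + t ^ 2) ^ (n + 2) * √(1 + t ^ 2 * sin θ ^ 2) := by
    have hnorm : 1 + (t * sin θ) ^ 2 + (t * cos θ) ^ 2 = 1 + t ^ 2 := by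
      linear_combination t ^ 2 * sin_sq_add_cos_sq θ
    rw [hnorm, mul_pow, smul_eq_mul]
    ring
  have hfour (t : ℝ) : ∫ θ in -π..π, √(1 + t ^ 2 * sin θ ^ 2) =
      4 * ∫ θ in 0..π / 2, √(1 + t ^ 2 * sin θ ^ 2) :=
    integral_neg_pi_pi_comp_sin_sq (g := fun s ↦ √(1 + t ^ 2 * s)) (by fun_prop)
  have hplane := integral_prod_sqrt_mul_inv_one_add_sq_add_sq_pow n
  rw [integral_eq_integral_Ioi_integral_polar (integrable_sqrt_mul_inv_one_add_sq_add_sq_pow n),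
    integral_inv_one_add_sq_pow, integral_inv_one_add_sq_pow] at hplane
  simp only [hpolar, intervalIntegral.integral_const_mul, hfour, mul_left_comm _ (4 : ℝ),
    integral_const_mul] at hplane
  linear_combination hplane / 4

/-- `∫₀^∞ t/(1+t²)³ · E(it) dt = 3π²/64`, where `E(it) = ∫₀^{π/2} √(1 + t² sin²θ) dθ`
is the complete elliptic integral of the second kind with imaginary modulus. -/
theorem integral_E_over_cube :
    ∫ t in Set.Ioi (0:ℝ),
        t / (1 + t ^ 2) ^ 3 *
          ∫ θ in (0:ℝ)..(π/2), Real.sqrt (1 + t ^ 2 * Real.sin θ ^ 2)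
      = 3 * π ^ 2 / 64 := by
  rw [integral_E_over_cube_general 1]
  norm_num [Finset.prod_range_succ]
  ring
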